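/- Set m := min{m₋,m₊} and m̄ := max{m₋,m₊}, and suppose β ≥ 2 c m̄/e. Let E₀, P₀ > 0 and, for α ∈ {−1,+1}, let σ₃^α ∈ C¹([0,∞)×ℝ) be nonnegative with (1/m₋²) σ₃^−(η/m₋, p) = (1/m₊²) σ₃^+(η/m₊, p) for all η ≥ 0, p ∈ ℝ, and σ₃^α(η,p) = 0 whenever η > E₀ or p > P₀. Define f₃^α(x,v) := σ₃^α(E^α(x,v), P^α(x,v)). Then each f₃^α is continuously differentiable and satisfies v·∂ₓ f₃^α(x,v) + (α e β/(c m_α)) v⊥·∂ᵥ f₃^α(x,v) = 0 on ℝ²×ℝ²; moreover f₃^α(x,v) = 0 whenever |v| > √(2E₀/m) or |x| > √(4P₀ + 2E₀/m); the induced densities ρ₃^α(x) := ∫_{ℝ²} f₃^α(x,v) dv satisfy ρ₃^− = ρ₃^+; and ‖f₃^α‖_{L¹(ℝ⁴)} < ∞ for both α. -/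

import Mathlib

/-!
Each `f₃^α` (`fm` and `fp` below) is a function of the two invariants `E^α` and `P^α` of the motion
of a charged particle in a homogeneous magnetic field. The transport direction is tangent to the
level sets of both invariants, so the chain rule gives the transport equation
(`fderiv_comp_invariants`). The support bound comes from `P ≥ (|x|² - |v|²) / 4`, valid once the
coefficient of `x · v⊥` is at most `1/2` in absolute value, which is what the lower bound on `β`
provides (`quarter_le_momentum`, `vanish_of_large`); a continuous function with compact support is
integrable. Finally, the matching condition on `σ₃^±` gives
`f₃^-(x, -(m₊/m₋) v) = (m₋/m₊)² f₃^+(x, v)`, and `(m₋/m₊)²` is the inverse of the Jacobian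
`(m₊/m₋)²` of the substitution `v ↦ -(m₊/m₋) v` in the plane, so the two densities agree.
-/

open Real MeasureTheory Set Filter

noncomputable section

/-- The rotation `v ↦ v⊥ = (v₂, -v₁)` on `ℝ²`. -/
def vperp (v : ℝ × ℝ) : ℝ × ℝ := (v.2, -v.1)

/-- The squared Euclidean norm on `ℝ²`. -/
def sqnorm (x : ℝ × ℝ) : ℝ := x.1 ^ 2 + x.2 ^ 2

/-- The Euclidean norm on `ℝ²`. -/
def rnorm (x : ℝ × ℝ) : ℝ := Real.sqrt (x.1 ^ 2 + x.2 ^ 2)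

/-- The Euclidean dot product on `ℝ²`. -/
def rdot (x y : ℝ × ℝ) : ℝ := x.1 * y.1 + x.2 * y.2

/-- The pair `(E, P)` of invariants for mass `m`, where `k` is the coefficient of `x · v⊥`. -/
def invariants (m k : ℝ) (z : (ℝ × ℝ) × (ℝ × ℝ)) : ℝ × ℝ :=
  ((1/2) * m * sqnorm z.2, (1/2) * sqnorm z.1 + k * rdot z.1 (vperp z.2))

lemma contDiff_invariants (m k : ℝ) : ContDiff ℝ 1 (invariants m k) := by
  unfold invariants sqnorm rdot vperp
  fun_prop

lemma invariants_mem {m : ℝ} (hm : 0 < m) (k : ℝ) (z : (ℝ × ℝ) × (ℝ × ℝ)) :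
    invariants m k z ∈ (Set.Ici 0 ×ˢ Set.univ : Set (ℝ × ℝ)) := by
  refine ⟨?_, trivial⟩
  simp only [invariants, sqnorm, Set.mem_Ici]
  positivity

lemma contDiff_comp_invariants {m k : ℝ} (hm : 0 < m) {σ : ℝ × ℝ → ℝ}
    (hσ : ContDiffOn ℝ 1 σ (Set.Ici 0 ×ˢ Set.univ)) :
    ContDiff ℝ 1 (fun z => σ (invariants m k z)) :=
  hσ.comp_contDiff (contDiff_invariants m k) (invariants_mem hm k)

/-- A function of the invariants is annihilated by the transport field `(v, l v⊥)` when `k l = 1`.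
The outer function `σ` is only controlled on the closed half-plane `η ≥ 0`, so its derivative is
taken within that set; the invariants never leave it. -/
lemma fderiv_comp_invariants {m k l : ℝ} (hm : 0 < m) (hkl : k * l = 1) {σ : ℝ × ℝ → ℝ}
    (hσ : ContDiffOn ℝ 1 σ (Set.Ici 0 ×ˢ Set.univ)) (x v : ℝ × ℝ) :
    fderiv ℝ (fun z => σ (invariants m k z)) (x, v) (v, l • vperp v) = 0 := by
  set w : (ℝ × ℝ) × (ℝ × ℝ) := (v, l • vperp v) with hw
  have hf : DifferentiableAt ℝ (fun z => σ (invariants m k z)) (x, v) :=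
    (contDiff_comp_invariants hm hσ).differentiable one_ne_zero _
  -- The invariants are quadratic, and along a line in the transport direction their linear
  -- terms cancel.
  have hquad : (fun t : ℝ => invariants m k ((x, v) + t • w)) = fun t : ℝ =>
      invariants m k (x, v) + t ^ 2 • ((1/2) * m * l ^ 2 * sqnorm v,
        (1/2 - k * l) * sqnorm v) := by
    funext t
    obtain ⟨x₁, x₂⟩ := x
    obtain ⟨v₁, v₂⟩ := v
    ext
    · simp [hw, invariants, sqnorm, vperp]
      ring
    · simp [hw, invariants, sqnorm, rdot, vperp]
      linear_combination (-(t * (x₁ * v₁ + x₂ * v₂))) * hkl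
  have hcurve : HasDerivAt (fun t : ℝ => invariants m k ((x, v) + t • w)) 0 0 := by
    rw [hquad]
    have h := ((hasDerivAt_pow 2 (0 : ℝ)).smul_const ((1/2) * m * l ^ 2 * sqnorm v,
        (1/2 - k * l) * sqnorm v)).const_add (invariants m k (x, v))
    simpa using h
  have hσd : HasFDerivWithinAt σ
      (fderivWithin ℝ σ (Set.Ici 0 ×ˢ Set.univ) (invariants m k (x, v)))
      (Set.Ici 0 ×ˢ Set.univ) (invariants m k ((x, v) + (0 : ℝ) • w)) := by
    simpa using (hσ.differentiableOn one_ne_zero _ (invariants_mem hm k (x, v))).hasFDerivWithinAt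
  have h₁ : HasDerivAt (fun t : ℝ => σ (invariants m k ((x, v) + t • w))) 0 0 := by
    have h := hσd.comp_hasDerivAt (0 : ℝ) hcurve
      (Filter.Eventually.of_forall fun t => invariants_mem hm k _)
    rwa [map_zero] at h
  have h₂ := hf.hasFDerivAt.hasLineDerivAt w
  exact h₂.unique h₁

/-- Cauchy–Schwarz and Young's inequality for the invariant `P`. -/
lemma quarter_le_momentum {k : ℝ} (hk : |k| ≤ 1/2) (x v : ℝ × ℝ) :
    (1/4) * (sqnorm x - sqnorm v) ≤ (1/2) * sqnorm x + k * rdot x (vperp v) := by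
  have hdot : |rdot x (vperp v)| ≤ (sqnorm x + sqnorm v) / 2 := by
    simp only [rdot, vperp, sqnorm, abs_le]
    constructor <;>
      nlinarith [sq_nonneg (x.1 + v.2), sq_nonneg (x.2 - v.1), sq_nonneg (x.1 - v.2),
        sq_nonneg (x.2 + v.1)]
  have hprod : |k * rdot x (vperp v)| ≤ 1/2 * ((sqnorm x + sqnorm v) / 2) := by
    rw [abs_mul]
    gcongr
  linarith [(abs_le.mp hprod).1]

lemma lt_of_sqrt_lt {a b : ℝ} (h : Real.sqrt a < Real.sqrt b) : a < b :=
  lt_of_not_ge fun hba => (Real.sqrt_le_sqrt hba).not_gt h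

/-- A large velocity forces `E > E₀`. Otherwise `|v|² ≤ 2 E₀ / μ`, where `μ` is a lower bound for
the mass `m`, and then a large position forces `P > P₀`. -/
lemma vanish_of_large {m μ k E₀ P₀ : ℝ} (hμ : 0 < μ) (hμm : μ ≤ m) (hE₀ : 0 < E₀)
    (hk : |k| ≤ 1/2) {σ : ℝ × ℝ → ℝ}
    (hvan : ∀ η p : ℝ, (E₀ < η ∨ P₀ < p) → σ (η, p) = 0) (x v : ℝ × ℝ)
    (h : Real.sqrt (2 * E₀ / μ) < rnorm v ∨ Real.sqrt (4 * P₀ + 2 * E₀ / μ) < rnorm x) :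
    σ (invariants m k (x, v)) = 0 := by
  have key : 2 * E₀ / μ < sqnorm v → E₀ < (1/2) * m * sqnorm v := by
    intro hv
    rw [div_lt_iff₀ hμ] at hv
    have : 0 ≤ sqnorm v := by unfold sqnorm; positivity
    nlinarith
  apply hvan
  by_cases hv : 2 * E₀ / μ < sqnorm v
  · exact Or.inl (key hv)
  · right
    rcases h with h | h
    · exact absurd (lt_of_sqrt_lt h) hv
    · have hx : 4 * P₀ + 2 * E₀ / μ < sqnorm x := lt_of_sqrt_lt h
      have := quarter_le_momentum hk x v
      simp only
      linarith

lemma abs_fst_le_rnorm (x : ℝ × ℝ) : |x.1| ≤ rnorm x :=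
  Real.abs_le_sqrt (by nlinarith [sq_nonneg x.2])

lemma abs_snd_le_rnorm (x : ℝ × ℝ) : |x.2| ≤ rnorm x :=
  Real.abs_le_sqrt (by nlinarith [sq_nonneg x.1])

lemma norm_le_rnorm (x : ℝ × ℝ) : ‖x‖ ≤ rnorm x :=
  max_le (abs_fst_le_rnorm x) (abs_snd_le_rnorm x)

lemma integrable_of_vanish {f : (ℝ × ℝ) × (ℝ × ℝ) → ℝ} (hf : Continuous f) (A B : ℝ)
    (h : ∀ x v : ℝ × ℝ, (A < rnorm v ∨ B < rnorm x) → f (x, v) = 0) :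
    MeasureTheory.Integrable f := by
  refine hf.integrable_of_hasCompactSupport
    (HasCompactSupport.intro
      ((isCompact_closedBall (0 : ℝ × ℝ) B).prod (isCompact_closedBall (0 : ℝ × ℝ) A)) ?_)
  rintro ⟨x, v⟩ hz
  apply h
  by_contra! hcon
  exact hz ⟨mem_closedBall_zero_iff.mpr ((norm_le_rnorm x).trans hcon.2),
    mem_closedBall_zero_iff.mpr ((norm_le_rnorm v).trans hcon.1)⟩

/-- compactly supported steady states with finite charge depending only on
the invariants `E^α(x,v) = ½ m_α |v|²` and `P^α(x,v) = ½|x|² + α (c m_α/(e β)) x·v⊥`. -/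
theorem stmt3
    (e c β mminus mplus E₀ P₀ : ℝ) (he : 0 < e) (hc : 0 < c) (hβ : 0 < β)
    (hmm : 0 < mminus) (hmp : 0 < mplus) (hE₀ : 0 < E₀) (hP₀ : 0 < P₀)
    (hβbig : 2 * c * max mminus mplus / e ≤ β)
    (σm σp : ℝ × ℝ → ℝ)
    (hσmC1 : ContDiffOn ℝ 1 σm (Set.Ici 0 ×ˢ Set.univ))
    (hσpC1 : ContDiffOn ℝ 1 σp (Set.Ici 0 ×ˢ Set.univ))
    (hσmpos : ∀ η p : ℝ, 0 ≤ η → 0 ≤ σm (η, p))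
    (hσppos : ∀ η p : ℝ, 0 ≤ η → 0 ≤ σp (η, p))
    (hmatch : ∀ η p : ℝ, 0 ≤ η →
      (1 / mminus ^ 2) * σm (η / mminus, p) = (1 / mplus ^ 2) * σp (η / mplus, p))
    (hvanm : ∀ η p : ℝ, (E₀ < η ∨ P₀ < p) → σm (η, p) = 0)
    (hvanp : ∀ η p : ℝ, (E₀ < η ∨ P₀ < p) → σp (η, p) = 0)
    (fm fp : (ℝ × ℝ) × (ℝ × ℝ) → ℝ)
    (hfm : ∀ x v : ℝ × ℝ, fm (x, v) = σm ((1/2) * mminus * sqnorm v,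
      (1/2) * sqnorm x + (-1) * (c * mminus / (e * β)) * rdot x (vperp v)))
    (hfp : ∀ x v : ℝ × ℝ, fp (x, v) = σp ((1/2) * mplus * sqnorm v,
      (1/2) * sqnorm x + 1 * (c * mplus / (e * β)) * rdot x (vperp v))) :
    ContDiff ℝ 1 fm ∧ ContDiff ℝ 1 fp ∧
    (∀ x v : ℝ × ℝ,
      fderiv ℝ fm (x, v) (v, ((-1) * e * β / (c * mminus)) • vperp v) = 0) ∧
    (∀ x v : ℝ × ℝ,
      fderiv ℝ fp (x, v) (v, (1 * e * β / (c * mplus)) • vperp v) = 0) ∧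
    (∀ x v : ℝ × ℝ,
      (Real.sqrt (2 * E₀ / min mminus mplus) < rnorm v ∨
        Real.sqrt (4 * P₀ + 2 * E₀ / min mminus mplus) < rnorm x) →
      fm (x, v) = 0 ∧ fp (x, v) = 0) ∧
    (∀ x : ℝ × ℝ, (∫ v : ℝ × ℝ, fm (x, v)) = ∫ v : ℝ × ℝ, fp (x, v)) ∧
    MeasureTheory.Integrable fm ∧ MeasureTheory.Integrable fp := by
  have hmin : 0 < min mminus mplus := lt_min hmm hmp
  have hcoef : ∀ m, 0 < m → m ≤ max mminus mplus → |c * m / (e * β)| ≤ 1/2 := by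
    intro m hm hle
    rw [abs_of_pos (by positivity), div_le_iff₀ (by positivity)]
    rw [div_le_iff₀ he] at hβbig
    nlinarith
  have hkm : |(-1) * (c * mminus / (e * β))| ≤ 1/2 := by
    rw [abs_mul, abs_neg, abs_one, one_mul]
    exact hcoef _ hmm (le_max_left _ _)
  have hkp : |1 * (c * mplus / (e * β))| ≤ 1/2 := by
    rw [one_mul]
    exact hcoef _ hmp (le_max_right _ _)
  have hfm' : fm = fun z => σm (invariants mminus ((-1) * (c * mminus / (e * β))) z) :=
    funext fun z => hfm z.1 z.2
  have hfp' : fp = fun z => σp (invariants mplus (1 * (c * mplus / (e * β))) z) :=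
    funext fun z => hfp z.1 z.2
  have hCm : ContDiff ℝ 1 fm := hfm' ▸ contDiff_comp_invariants hmm hσmC1
  have hCp : ContDiff ℝ 1 fp := hfp' ▸ contDiff_comp_invariants hmp hσpC1
  have hvan : ∀ x v : ℝ × ℝ,
      (Real.sqrt (2 * E₀ / min mminus mplus) < rnorm v ∨
        Real.sqrt (4 * P₀ + 2 * E₀ / min mminus mplus) < rnorm x) →
      fm (x, v) = 0 ∧ fp (x, v) = 0 := by
    intro x v h
    rw [hfm', hfp']
    exact ⟨vanish_of_large hmin (min_le_left _ _) hE₀ hkm hvanm x v h,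
      vanish_of_large hmin (min_le_right _ _) hE₀ hkp hvanp x v h⟩
  refine ⟨hCm, hCp, ?_, ?_, hvan, ?_, ?_, ?_⟩
  · intro x v
    rw [hfm']
    exact fderiv_comp_invariants hmm (by field_simp) hσmC1 x v
  · intro x v
    rw [hfp']
    exact fderiv_comp_invariants hmp (by field_simp) hσpC1 x v
  · intro x
    have hpt : ∀ v : ℝ × ℝ,
        fm (x, (-(mplus / mminus)) • v) = (mminus / mplus) ^ 2 * fp (x, v) := by
      intro v
      -- The matching condition at `η = |m₊ v|² / 2`.
      have h := hmatch ((1/2) * mplus ^ 2 * sqnorm v)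
        ((1/2) * sqnorm x + 1 * (c * mplus / (e * β)) * rdot x (vperp v))
        (by unfold sqnorm; positivity)
      have e₁ : (1/2) * mplus ^ 2 * sqnorm v / mminus
          = (1/2) * mminus * sqnorm ((-(mplus / mminus)) • v) := by
        simp [sqnorm]
        field_simp
      have e₂ : (1/2) * mplus ^ 2 * sqnorm v / mplus = (1/2) * mplus * sqnorm v := by
        field_simp
      have e₃ : (1/2) * sqnorm x + 1 * (c * mplus / (e * β)) * rdot x (vperp v)
          = (1/2) * sqnorm x + (-1) * (c * mminus / (e * β)) *
            rdot x (vperp ((-(mplus / mminus)) • v)) := by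
        simp [rdot, vperp]
        field_simp
        ring
      rw [e₁, e₂, ← hfp] at h
      rw [e₃, ← hfm] at h
      field_simp at h ⊢
      linear_combination h
    -- The exponent of the scaling factor is the real dimension of the plane, two.
    have hscale := MeasureTheory.Measure.integral_comp_smul (volume : Measure (ℝ × ℝ))
      (fun v => fm (x, v)) (-(mplus / mminus))
    simp only [hpt, integral_const_mul, Module.finrank_prod, Module.finrank_self,
      smul_eq_mul] at hscale
    rw [one_add_one_eq_two, neg_sq, abs_of_nonneg (by positivity)] at hscale
    field_simp at hscale
    exact hscale.symm
  · exact integrable_of_vanish hCm.continuous _ _ fun x v h => (hvan x v h).1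
  · exact integrable_of_vanish hCp.continuous _ _ fun x v h => (hvan x v h).2
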